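/- If x ~ t_d(μ, Σ, ν), ε = x − μ and δ = ε'Σ^{-1}ε, then E[(ν+δ)^{-2} ε ε'] = Σ / ((ν+d)(ν+d+2)). -/

import Mathlib

open MeasureTheory Matrix Set
open scoped Kronecker

noncomputable section

instance matrixMeasureSpace {m n : ℕ} : MeasureSpace (Matrix (Fin m) (Fin n) ℝ) :=
  inferInstanceAs (MeasureSpace ((Fin m) → (Fin n) → ℝ))

/-- Column-stacking vectorization of a matrix (indexed by (column, row)). -/
def vecM {dc dr : ℕ} (A : Matrix (Fin dc) (Fin dr) ℝ) : (Fin dr × Fin dc) → ℝ :=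
  fun p => A p.2 p.1

/-- Density of the multivariate t distribution `t_d(μ, S, ν)`. -/
def mvtPdf {n : Type*} [Fintype n] [DecidableEq n] (ν : ℝ) (μ : n → ℝ)
    (S : Matrix n n ℝ) (x : n → ℝ) : ℝ :=
  S.det ^ (-(1:ℝ)/2) * Real.Gamma ((ν + Fintype.card n) / 2) /
    ((Real.pi * ν) ^ ((Fintype.card n : ℝ) / 2) * Real.Gamma (ν / 2)) *
    (1 + (x - μ) ⬝ᵥ (S⁻¹ *ᵥ (x - μ)) / ν) ^ (-(ν + Fintype.card n) / 2)

/-- Density of the multivariate normal distribution `N(μ, S)`. -/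
def mvnPdf {n : Type*} [Fintype n] [DecidableEq n] (μ : n → ℝ)
    (S : Matrix n n ℝ) (x : n → ℝ) : ℝ :=
  (2 * Real.pi) ^ (-(Fintype.card n : ℝ) / 2) * S.det ^ (-(1:ℝ)/2) *
    Real.exp (-((x - μ) ⬝ᵥ (S⁻¹ *ᵥ (x - μ))) / 2)

/-- Density of the matrix-variate t distribution `Mt_{dc,dr}(W, Sc, Sr, ν)`. -/
def matTPdf {dc dr : ℕ} (ν : ℝ) (W : Matrix (Fin dc) (Fin dr) ℝ)
    (Sc : Matrix (Fin dc) (Fin dc) ℝ) (Sr : Matrix (Fin dr) (Fin dr) ℝ)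
    (X : Matrix (Fin dc) (Fin dr) ℝ) : ℝ :=
  Sc.det ^ (-(dr : ℝ) / 2) * Sr.det ^ (-(dc : ℝ) / 2) *
    Real.Gamma ((ν + dc * dr) / 2) /
    ((Real.pi * ν) ^ ((dc * dr : ℕ) / (2:ℝ)) * Real.Gamma (ν / 2)) *
    (1 + (Sc⁻¹ * (X - W) * Sr⁻¹ * (X - W)ᵀ).trace / ν) ^ (-(ν + dc * dr) / 2)

/-- Density of the matrix-normal distribution `N_{p,q}(M, U, V)`. -/
def matNormPdf {p q : ℕ} (M : Matrix (Fin p) (Fin q) ℝ) (U : Matrix (Fin p) (Fin p) ℝ)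
    (V : Matrix (Fin q) (Fin q) ℝ) (X : Matrix (Fin p) (Fin q) ℝ) : ℝ :=
  mvnPdf (vecM M) (V ⊗ₖ U) (vecM X)

/-- Density of the Gamma(shape a, rate b) distribution (on `(0,∞)`). -/
def gammaPdf (a b x : ℝ) : ℝ :=
  if 0 < x then b ^ a / Real.Gamma a * x ^ (a - 1) * Real.exp (-(b * x)) else 0

/-- Density of the Beta(a, b) distribution. -/
def betaPdf (a b x : ℝ) : ℝ :=
  if 0 < x ∧ x < 1 then
    Real.Gamma (a + b) / (Real.Gamma a * Real.Gamma b) * x ^ (a - 1) * (1 - x) ^ (b - 1)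
  else 0

/-- Density of the F distribution with `d` and `ν` degrees of freedom. -/
def fPdf (d ν x : ℝ) : ℝ :=
  if 0 < x then
    Real.Gamma ((d + ν) / 2) / (Real.Gamma (d / 2) * Real.Gamma (ν / 2)) *
      (d / ν) ^ (d / 2) * x ^ (d / 2 - 1) * (1 + d * x / ν) ^ (-(d + ν) / 2)
  else 0

/-!
Writing `(ν + δ) ^ (-p)` as a Gamma mixture of the exponentials `exp (-t (ν + δ))` and applying
Fubini reduces the expectation of `(ν + δ) ^ (-s) • f ε` to integrals of `f ε` against the
Gaussian weights `exp (-t δ)`. If `f` is homogeneous, rescaling `ε` turns the inner integral into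
a power of `t` times its value at `t = 1`, and the remaining integral in `t` is again a Gamma
integral. For `f ε = ε i * ε j` the value at `t = 1` is a Gaussian second moment, computed by
factoring `S = L * Lᵀ` and substituting `ε = L *ᵥ z`.
-/

section GammaMixture

lemma integral_rpow_mul_exp_neg_mul {a r : ℝ} (ha : 0 < a) (hr : 0 < r) :
    ∫ t in Ioi (0 : ℝ), t ^ (a - 1) * Real.exp (-(r * t)) = Real.Gamma a * r ^ (-a) := by
  rw [Real.integral_rpow_mul_exp_neg_mul_Ioi ha hr, one_div, Real.inv_rpow hr.le,
    Real.rpow_neg hr.le, mul_comm]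

lemma integrableOn_rpow_mul_exp_neg_mul {a r : ℝ} (ha : 0 < a) (hr : 0 < r) :
    IntegrableOn (fun t : ℝ => t ^ (a - 1) * Real.exp (-(r * t))) (Ioi 0) := by
  refine .of_integral_ne_zero ?_
  rw [integral_rpow_mul_exp_neg_mul ha hr]
  exact mul_ne_zero (Real.Gamma_pos_of_pos ha).ne' (Real.rpow_pos_of_pos hr _).ne'

variable {E F : Type*} [NormedAddCommGroup E] [NormedSpace ℝ E]
  [NormedAddCommGroup F] [NormedSpace ℝ F]

/-- `f` is positively homogeneous of real degree `k`; this is what lets a rescaling of `y` absorb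
the parameter `t` of the weight `exp (-t * q y)`. Only positive scalars are tested, so that the
real power `c ^ k` takes no junk value. -/
def PosHomogeneous (k : ℝ) (f : E → F) : Prop :=
  ∀ ⦃c : ℝ⦄, 0 < c → ∀ y, f (c • y) = c ^ k • f y

namespace PosHomogeneous

open Module (finrank)

variable {k l : ℝ} {f : E → F} {q : E → ℝ}

lemma norm (hf : PosHomogeneous k f) : PosHomogeneous k fun y => ‖f y‖ := fun c hc y => by
  dsimp only
  rw [hf hc, norm_smul, Real.norm_of_nonneg (Real.rpow_nonneg hc.le k), smul_eq_mul]

lemma exp_neg_smul_comp_smul (hf : PosHomogeneous k f) (hq : PosHomogeneous l q) (hl : l ≠ 0)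
    {t : ℝ} (ht : 0 < t) (y : E) :
    Real.exp (-q (t ^ l⁻¹ • y)) • f (t ^ l⁻¹ • y) =
      t ^ (k / l) • Real.exp (-(t * q y)) • f y := by
  have hc : 0 < t ^ l⁻¹ := Real.rpow_pos_of_pos ht _
  rw [hf hc, hq hc, ← Real.rpow_mul ht.le, ← Real.rpow_mul ht.le, inv_mul_cancel₀ hl,
    Real.rpow_one, inv_mul_eq_div, smul_eq_mul, smul_comm]

variable [MeasurableSpace E] [BorelSpace E] [FiniteDimensional ℝ E] {m : Measure E}
  [m.IsAddHaarMeasure]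

lemma integrable_exp_neg_mul_smul (hf : PosHomogeneous k f) (hq : PosHomogeneous l q)
    (hl : l ≠ 0) (hfq : Integrable (fun y => Real.exp (-q y) • f y) m) {t : ℝ} (ht : 0 < t) :
    Integrable (fun y => Real.exp (-(t * q y)) • f y) m := by
  have h := hfq.comp_smul (Real.rpow_pos_of_pos ht l⁻¹).ne'
  simp only [hf.exp_neg_smul_comp_smul hq hl ht] at h
  exact (integrable_smul_iff (Real.rpow_pos_of_pos ht _).ne' _).mp h

lemma integral_exp_neg_mul_smul (hf : PosHomogeneous k f) (hq : PosHomogeneous l q)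
    (hl : l ≠ 0) {t : ℝ} (ht : 0 < t) :
    ∫ y, Real.exp (-(t * q y)) • f y ∂m =
      t ^ (-((k + finrank ℝ E) / l)) • ∫ y, Real.exp (-q y) • f y ∂m := by
  have hpow : t ^ (k / l) * t ^ (-((k + finrank ℝ E) / l)) = |((t ^ l⁻¹) ^ finrank ℝ E)⁻¹| := by
    rw [abs_of_nonneg (by positivity), ← Real.rpow_mul_natCast ht.le, ← Real.rpow_neg ht.le,
      ← Real.rpow_add ht]
    congr 1
    ring
  have hscale := Measure.integral_comp_smul m (fun y => Real.exp (-q y) • f y) (t ^ l⁻¹)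
  simp only [hf.exp_neg_smul_comp_smul hq hl ht, integral_smul, ← hpow, mul_smul] at hscale
  exact smul_right_injective F (Real.rpow_pos_of_pos ht (k / l)).ne' hscale

lemma integral_rpow_mul_exp_neg_add_mul_smul (hf : PosHomogeneous k f) (hq : PosHomogeneous l q)
    (hl : l ≠ 0) (ν p : ℝ) {t : ℝ} (ht : 0 < t) :
    ∫ y, (t ^ (p - 1) * Real.exp (-((ν + q y) * t))) • f y ∂m =
      (t ^ (p - (k + finrank ℝ E) / l - 1) * Real.exp (-(ν * t))) •
        ∫ y, Real.exp (-q y) • f y ∂m := by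
  have hsplit (y : E) : (t ^ (p - 1) * Real.exp (-((ν + q y) * t))) • f y =
      (t ^ (p - 1) * Real.exp (-(ν * t))) • Real.exp (-(t * q y)) • f y := by
    rw [smul_smul, mul_assoc, ← Real.exp_add]
    ring_nf
  simp only [hsplit, integral_smul]
  rw [hf.integral_exp_neg_mul_smul hq hl ht, smul_smul, mul_right_comm, ← Real.rpow_add ht]
  ring_nf

lemma integrable_prod_rpow_mul_exp_neg_add_mul_smul (hf : PosHomogeneous k f)
    (hq : PosHomogeneous l q) (hl : l ≠ 0) (hqm : Measurable q)
    (hfq : Integrable (fun y => Real.exp (-q y) • f y) m) {ν p : ℝ} (hν : 0 < ν)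
    (hp : (k + finrank ℝ E) / l < p) :
    Integrable (Function.uncurry fun (t : ℝ) (y : E) =>
      (t ^ (p - 1) * Real.exp (-((ν + q y) * t))) • f y) ((volume.restrict (Ioi 0)).prod m) := by
  have hfm : AEStronglyMeasurable f m := by
    refine ((hqm.exp.aestronglyMeasurable).smul hfq.aestronglyMeasurable).congr
      (ae_of_all _ fun y => ?_)
    simp [smul_smul, ← Real.exp_add]
  have hmeas : AEStronglyMeasurable (Function.uncurry fun (t : ℝ) (y : E) =>
      (t ^ (p - 1) * Real.exp (-((ν + q y) * t))) • f y) ((volume.restrict (Ioi 0)).prod m) :=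
    AEStronglyMeasurable.smul (by fun_prop) hfm.comp_snd
  refine (integrable_prod_iff hmeas).mpr ⟨?_, ?_⟩
  · refine ae_restrict_of_forall_mem measurableSet_Ioi fun t ht => ?_
    convert (hf.integrable_exp_neg_mul_smul hq hl hfq ht).smul
      (t ^ (p - 1) * Real.exp (-(ν * t))) using 2 with y
    simp only [Function.uncurry, Pi.smul_apply, smul_smul, mul_assoc, ← Real.exp_add]
    ring_nf
  · have hbound := (integrableOn_rpow_mul_exp_neg_mul (sub_pos.mpr hp) hν).smul_const
      (∫ y, Real.exp (-q y) • ‖f y‖ ∂m)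
    refine IntegrableOn.congr_fun hbound (fun t (ht : 0 < t) => ?_) measurableSet_Ioi
    simp only [Function.uncurry, norm_smul, norm_mul, Real.norm_eq_abs, Real.abs_exp,
      abs_of_nonneg (Real.rpow_nonneg ht.le _)]
    exact (hf.norm.integral_rpow_mul_exp_neg_add_mul_smul hq hl ν p ht).symm

theorem integral_add_rpow_neg_smul [CompleteSpace F] (hf : PosHomogeneous k f)
    (hq : PosHomogeneous l q) (hl : l ≠ 0) (hqm : Measurable q) (hq0 : ∀ y, 0 ≤ q y)
    (hfq : Integrable (fun y => Real.exp (-q y) • f y) m) {ν p : ℝ} (hν : 0 < ν) (hp0 : 0 < p)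
    (hp : (k + finrank ℝ E) / l < p) :
    ∫ y, (ν + q y) ^ (-p) • f y ∂m =
      (Real.Gamma (p - (k + finrank ℝ E) / l) / Real.Gamma p *
        ν ^ (-(p - (k + finrank ℝ E) / l))) • ∫ y, Real.exp (-q y) • f y ∂m := by
  have hGamma : Real.Gamma p ≠ 0 := (Real.Gamma_pos_of_pos hp0).ne'
  have hmix (y : E) : (ν + q y) ^ (-p) • f y = (Real.Gamma p)⁻¹ •
      ∫ t in Ioi (0 : ℝ), (t ^ (p - 1) * Real.exp (-((ν + q y) * t))) • f y := by
    rw [integral_smul_const,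
      integral_rpow_mul_exp_neg_mul hp0 (add_pos_of_pos_of_nonneg hν (hq0 y)), smul_smul,
      inv_mul_cancel_left₀ hGamma]
  simp only [hmix, integral_smul]
  rw [← integral_integral_swap
      (hf.integrable_prod_rpow_mul_exp_neg_add_mul_smul hq hl hqm hfq hν hp),
    setIntegral_congr_fun measurableSet_Ioi fun t ht =>
      hf.integral_rpow_mul_exp_neg_add_mul_smul hq hl ν p ht,
    integral_smul_const, integral_rpow_mul_exp_neg_mul (sub_pos.mpr hp) hν, smul_smul]
  congr 1
  ring

end PosHomogeneous

end GammaMixture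

section GaussianMoments

lemma integrable_pow_mul_exp_neg_sq (n : ℕ) :
    Integrable fun x : ℝ => x ^ n * Real.exp (-x ^ 2) := by
  simpa using integrable_rpow_mul_exp_neg_mul_sq one_pos
    (show (-1 : ℝ) < n from neg_one_lt_zero.trans_le n.cast_nonneg)

lemma integral_pow_mul_exp_neg_sq_of_odd {n : ℕ} (hn : Odd n) :
    ∫ x : ℝ, x ^ n * Real.exp (-x ^ 2) = 0 := by
  have h := integral_neg_eq_self (fun x : ℝ => x ^ n * Real.exp (-x ^ 2)) volume
  simp only [hn.neg_pow, even_two.neg_pow, neg_mul, integral_neg] at h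
  linarith

lemma integral_pow_mul_exp_neg_sq_of_even {n : ℕ} (hn : Even n) :
    ∫ x : ℝ, x ^ n * Real.exp (-x ^ 2) = Real.Gamma ((n + 1) / 2) := by
  have h := integral_comp_abs (f := fun x : ℝ => x ^ (n : ℝ) * Real.exp (-x ^ (2 : ℝ)))
  rw [integral_rpow_mul_exp_neg_rpow two_pos (neg_one_lt_zero.trans_le n.cast_nonneg)] at h
  simp only [Real.rpow_natCast, Real.rpow_two, sq_abs, hn.pow_abs] at h
  rw [h, one_div, mul_inv_cancel_left₀ two_ne_zero]

variable {ι : Type*} [Fintype ι]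

lemma prod_pow_mul_exp_neg_dotProduct_self (α : ι → ℕ) (z : ι → ℝ) :
    (∏ m, z m ^ α m) * Real.exp (-(z ⬝ᵥ z)) = ∏ m, z m ^ α m * Real.exp (-z m ^ 2) := by
  rw [Finset.prod_mul_distrib, ← Real.exp_sum, Finset.sum_neg_distrib]
  simp only [dotProduct, sq]

lemma integrable_prod_pow_mul_exp_neg_dotProduct_self (α : ι → ℕ) :
    Integrable fun z : ι → ℝ => (∏ m, z m ^ α m) * Real.exp (-(z ⬝ᵥ z)) := by
  simp only [prod_pow_mul_exp_neg_dotProduct_self]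
  exact Integrable.fintype_prod (f := fun m (x : ℝ) => x ^ α m * Real.exp (-x ^ 2))
    fun m => integrable_pow_mul_exp_neg_sq (α m)

lemma integral_prod_pow_mul_exp_neg_dotProduct_self (α : ι → ℕ) :
    ∫ z : ι → ℝ, (∏ m, z m ^ α m) * Real.exp (-(z ⬝ᵥ z)) =
      ∏ m, ∫ x : ℝ, x ^ α m * Real.exp (-x ^ 2) := by
  simp only [prod_pow_mul_exp_neg_dotProduct_self]
  exact integral_fintype_prod_volume_eq_prod fun m (x : ℝ) => x ^ α m * Real.exp (-x ^ 2)

lemma prod_pow_single_add_single [DecidableEq ι] (k l : ι) (z : ι → ℝ) :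
    ∏ m, z m ^ (Pi.single k 1 + Pi.single l 1 : ι → ℕ) m = z k * z l := by
  simp only [Pi.add_apply, pow_add, Finset.prod_mul_distrib, Pi.single_apply, pow_ite, pow_one,
    pow_zero, Finset.prod_ite_eq', Finset.mem_univ, if_true]

lemma integrable_mul_mul_exp_neg_dotProduct_self (k l : ι) :
    Integrable fun z : ι → ℝ => z k * z l * Real.exp (-(z ⬝ᵥ z)) := by
  classical
  simp only [← prod_pow_single_add_single k l]
  exact integrable_prod_pow_mul_exp_neg_dotProduct_self _

lemma integral_sq_mul_exp_neg_dotProduct_self (k : ι) :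
    ∫ z : ι → ℝ, z k * z k * Real.exp (-(z ⬝ᵥ z)) =
      Real.pi ^ ((Fintype.card ι : ℝ) / 2) / 2 := by
  classical
  have hfactor (m : ι) : ∫ x : ℝ, x ^ (Pi.single k 1 + Pi.single k 1 : ι → ℕ) m *
      Real.exp (-x ^ 2) = √Real.pi * if m = k then 1 / 2 else 1 := by
    rw [Pi.add_apply, integral_pow_mul_exp_neg_sq_of_even ⟨_, rfl⟩]
    obtain rfl | hm := eq_or_ne m k
    · rw [Pi.single_eq_same, if_pos rfl,
        show (((1 + 1 : ℕ) : ℝ) + 1) / 2 = 1 / 2 + 1 by norm_num,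
        Real.Gamma_add_one one_half_pos.ne', Real.Gamma_one_half_eq, mul_comm]
    · simp [hm, Real.Gamma_one_half_eq, -one_div]
  simp only [← prod_pow_single_add_single, integral_prod_pow_mul_exp_neg_dotProduct_self, hfactor]
  rw [Finset.prod_mul_distrib, Finset.prod_const, Finset.card_univ, Finset.prod_ite_eq',
    if_pos (Finset.mem_univ k), Real.sqrt_eq_rpow, ← Real.rpow_mul_natCast Real.pi_pos.le,
    one_div_mul_eq_div, mul_one_div]

lemma integral_mul_mul_exp_neg_dotProduct_self_of_ne {k l : ι} (hkl : k ≠ l) :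
    ∫ z : ι → ℝ, z k * z l * Real.exp (-(z ⬝ᵥ z)) = 0 := by
  classical
  simp only [← prod_pow_single_add_single, integral_prod_pow_mul_exp_neg_dotProduct_self]
  refine Finset.prod_eq_zero (Finset.mem_univ k) (integral_pow_mul_exp_neg_sq_of_odd ?_)
  simp [hkl]

lemma integral_mul_mul_exp_neg_dotProduct_self [DecidableEq ι] (k l : ι) :
    ∫ z : ι → ℝ, z k * z l * Real.exp (-(z ⬝ᵥ z)) =
      if k = l then Real.pi ^ ((Fintype.card ι : ℝ) / 2) / 2 else 0 := by
  split_ifs with hkl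
  · exact hkl ▸ integral_sq_mul_exp_neg_dotProduct_self k
  · exact integral_mul_mul_exp_neg_dotProduct_self_of_ne hkl

lemma dotProduct_mul_dotProduct_mul {R : Type*} [CommSemiring R] (a b z : ι → R) (w : R) :
    (a ⬝ᵥ z) * (b ⬝ᵥ z) * w = ∑ k, ∑ l, a k * b l * (z k * z l * w) := by
  rw [dotProduct, dotProduct, Finset.sum_mul_sum]
  simp only [Finset.sum_mul]
  exact Finset.sum_congr rfl fun k _ => Finset.sum_congr rfl fun l _ => by ring

lemma integrable_dotProduct_mul_dotProduct_mul_exp_neg (a b : ι → ℝ) :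
    Integrable fun z : ι → ℝ => (a ⬝ᵥ z) * (b ⬝ᵥ z) * Real.exp (-(z ⬝ᵥ z)) := by
  classical
  simp only [dotProduct_mul_dotProduct_mul]
  exact integrable_finsetSum _ fun k _ => integrable_finsetSum _ fun l _ =>
    (integrable_mul_mul_exp_neg_dotProduct_self k l).const_mul _

lemma integral_dotProduct_mul_dotProduct_mul_exp_neg (a b : ι → ℝ) :
    ∫ z : ι → ℝ, (a ⬝ᵥ z) * (b ⬝ᵥ z) * Real.exp (-(z ⬝ᵥ z)) =
      Real.pi ^ ((Fintype.card ι : ℝ) / 2) / 2 * (a ⬝ᵥ b) := by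
  classical
  have hint (k l : ι) := (integrable_mul_mul_exp_neg_dotProduct_self k l).const_mul (a k * b l)
  simp only [dotProduct_mul_dotProduct_mul]
  rw [integral_finsetSum _ fun k _ => integrable_finsetSum _ fun l _ => hint k l]
  simp only [integral_finsetSum _ fun l _ => hint _ l, integral_const_mul,
    integral_mul_mul_exp_neg_dotProduct_self, mul_ite, mul_zero, Finset.sum_ite_eq,
    Finset.mem_univ, if_true]
  rw [← Finset.sum_mul, mul_comm, dotProduct]

end GaussianMoments

section LinearChangeOfVariables

variable {ι : Type*} [Fintype ι] [DecidableEq ι] {F : Type*} [NormedAddCommGroup F]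
  {L : Matrix ι ι ℝ}

lemma measurableEmbedding_mulVec (hL : L.det ≠ 0) : MeasurableEmbedding (L *ᵥ ·) :=
  Continuous.measurableEmbedding (by fun_prop)
    (mulVec_injective_of_isUnit ((isUnit_iff_isUnit_det L).mpr hL.isUnit))

lemma map_mulVec_volume (hL : L.det ≠ 0) :
    (volume : Measure (ι → ℝ)).map (L *ᵥ ·) = ENNReal.ofReal |L.det⁻¹| • volume :=
  Real.map_matrix_volume_pi_eq_smul_volume_pi hL

lemma integrable_comp_mulVec_iff (hL : L.det ≠ 0) (g : (ι → ℝ) → F) :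
    Integrable (fun z => g (L *ᵥ z)) ↔ Integrable g := by
  have hc : ENNReal.ofReal |L.det⁻¹| ≠ 0 := by simpa using hL
  rw [← integrable_smul_measure (f := g) hc ENNReal.ofReal_ne_top, ← map_mulVec_volume hL,
    (measurableEmbedding_mulVec hL).integrable_map_iff, Function.comp_def]

lemma integral_eq_abs_det_smul_integral_comp_mulVec [NormedSpace ℝ F] (hL : L.det ≠ 0)
    (g : (ι → ℝ) → F) :
    ∫ y, g y = |L.det| • ∫ z, g (L *ᵥ z) := by
  rw [← (measurableEmbedding_mulVec hL).integral_map, map_mulVec_volume hL,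
    integral_smul_measure, ENNReal.toReal_ofReal (abs_nonneg _), smul_smul, abs_inv,
    mul_inv_cancel₀ (abs_ne_zero.mpr hL), one_smul]

end LinearChangeOfVariables

section Mahalanobis

variable {ι : Type*} [Fintype ι] [DecidableEq ι] {S : Matrix ι ι ℝ}

/-- The squared Mahalanobis length `yᵀ S⁻¹ y`; the paper's `δ` is its value at `y = x - μ`. -/
def mahalanobisSq (S : Matrix ι ι ℝ) (y : ι → ℝ) : ℝ :=
  y ⬝ᵥ (S⁻¹ *ᵥ y)

lemma continuous_mahalanobisSq (S : Matrix ι ι ℝ) : Continuous (mahalanobisSq S) := by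
  unfold mahalanobisSq
  fun_prop

lemma mahalanobisSq_nonneg (hS : S.PosSemidef) (y : ι → ℝ) : 0 ≤ mahalanobisSq S y := by
  simpa [mahalanobisSq] using hS.inv.dotProduct_mulVec_nonneg y

lemma posHomogeneous_mahalanobisSq (S : Matrix ι ι ℝ) : PosHomogeneous 2 (mahalanobisSq S) :=
  fun c _ y => by
    simp only [mahalanobisSq, mulVec_smul, dotProduct_smul, smul_dotProduct, smul_smul,
      Real.rpow_two, sq]

lemma mahalanobisSq_mul_transpose_mulVec {L : Matrix ι ι ℝ} (hL : L.det ≠ 0) (z : ι → ℝ) :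
    mahalanobisSq (L * Lᵀ) (L *ᵥ z) = z ⬝ᵥ z := by
  have hLt : IsUnit Lᵀ.det := by rw [det_transpose]; exact hL.isUnit
  rw [mahalanobisSq, mulVec_mulVec, Matrix.mul_inv_rev, Matrix.mul_assoc,
    nonsing_inv_mul _ hL.isUnit, Matrix.mul_one, dotProduct_mulVec, ← vecMul_transpose,
    vecMul_vecMul, mul_nonsing_inv _ hLt, vecMul_one]

open scoped MatrixOrder Matrix.Norms.L2Operator in
lemma exists_eq_mul_transpose_of_posDef (hS : S.PosDef) :
    ∃ L : Matrix ι ι ℝ, L.det ≠ 0 ∧ S = L * Lᵀ := by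
  obtain ⟨B, hB⟩ := CStarAlgebra.nonneg_iff_eq_star_mul_self.mp hS.posSemidef.nonneg
  refine ⟨Bᵀ, fun h => hS.det_pos.ne' ?_, by simpa [star_eq_conjTranspose] using hB⟩
  rw [hB, det_mul, ← det_transpose B, h, mul_zero]

lemma integrable_mul_mul_exp_neg_mahalanobisSq (hS : S.PosDef) (i j : ι) :
    Integrable fun y : ι → ℝ => y i * y j * Real.exp (-mahalanobisSq S y) := by
  obtain ⟨L, hL, rfl⟩ := exists_eq_mul_transpose_of_posDef hS
  rw [← integrable_comp_mulVec_iff hL]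
  simp only [mahalanobisSq_mul_transpose_mulVec hL]
  exact integrable_dotProduct_mul_dotProduct_mul_exp_neg (L i) (L j)

lemma integral_mul_mul_exp_neg_mahalanobisSq (hS : S.PosDef) (i j : ι) :
    ∫ y : ι → ℝ, y i * y j * Real.exp (-mahalanobisSq S y) =
      √S.det * Real.pi ^ ((Fintype.card ι : ℝ) / 2) / 2 * S i j := by
  obtain ⟨L, hL, rfl⟩ := exists_eq_mul_transpose_of_posDef hS
  have hmoment := integral_dotProduct_mul_dotProduct_mul_exp_neg (L i) (L j)
  rw [integral_eq_abs_det_smul_integral_comp_mulVec hL]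
  simp only [mahalanobisSq_mul_transpose_mulVec hL]
  rw [det_mul, det_transpose, Real.sqrt_mul_self_eq_abs, smul_eq_mul, mul_div_assoc, mul_assoc]
  exact congrArg (|L.det| * ·) hmoment

end Mahalanobis

section MultivariateT

lemma gamma_add_two {a : ℝ} (ha : 0 < a) :
    Real.Gamma (a + 2) = (a + 1) * (a * Real.Gamma a) := by
  rw [← one_add_one_eq_two, ← add_assoc, Real.Gamma_add_one (by positivity),
    Real.Gamma_add_one ha.ne']

variable {ι : Type*} [Fintype ι] [DecidableEq ι] {ν s : ℝ} {S : Matrix ι ι ℝ}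

/-- The factor `c` in `mvtPdf ν μ S x = c * (ν + δ) ^ (-(ν + d) / 2)`. It differs from the usual
normalizing constant by a power of `ν`, because the base is `ν + δ` instead of `1 + δ / ν`. -/
def mvtPdfConst (ν : ℝ) (S : Matrix ι ι ℝ) : ℝ :=
  Real.Gamma ((ν + Fintype.card ι) / 2) * ν ^ (ν / 2) /
    (√S.det * Real.pi ^ ((Fintype.card ι : ℝ) / 2) * Real.Gamma (ν / 2))

lemma mvtPdf_eq_const_mul_rpow (hν : 0 < ν) (hS : S.PosSemidef) (μ x : ι → ℝ) :
    mvtPdf ν μ S x = mvtPdfConst ν S *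
      (ν + mahalanobisSq S (x - μ)) ^ (-((ν + Fintype.card ι) / 2)) := by
  have hbase := add_pos_of_pos_of_nonneg hν (mahalanobisSq_nonneg hS (x - μ))
  have hνpow : ν ^ ((ν + Fintype.card ι) / 2) = ν ^ (ν / 2) * ν ^ ((Fintype.card ι : ℝ) / 2) := by
    rw [add_div, Real.rpow_add hν]
  have hνcard := (Real.rpow_pos_of_pos hν ((Fintype.card ι : ℝ) / 2)).ne'
  rw [mvtPdf, mvtPdfConst, ← mahalanobisSq, one_add_div hν.ne', neg_div _ (ν + _),
    Real.div_rpow hbase.le hν.le, Real.rpow_neg hν.le, hνpow, Real.mul_rpow Real.pi_pos.le hν.le,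
    neg_div, Real.rpow_neg hS.det_nonneg, ← Real.sqrt_eq_rpow]
  field_simp

theorem integral_add_rpow_neg_mul_homogeneous_mul_mvtPdf {k : ℝ} {f : (ι → ℝ) → ℝ}
    (hf : PosHomogeneous k f) (hν : 0 < ν) (hS : S.PosSemidef)
    (hint : Integrable fun y => f y * Real.exp (-mahalanobisSq S y))
    (hs : k < ν + 2 * s) (hs0 : 0 < ν + Fintype.card ι + 2 * s) (μ : ι → ℝ) :
    ∫ x, (ν + mahalanobisSq S (x - μ)) ^ (-s) * f (x - μ) * mvtPdf ν μ S x =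
      mvtPdfConst ν S * (Real.Gamma ((ν - k) / 2 + s) /
        Real.Gamma ((ν + Fintype.card ι) / 2 + s) * ν ^ (-((ν - k) / 2 + s))) *
        ∫ y, f y * Real.exp (-mahalanobisSq S y) := by
  have hintegrand (y : ι → ℝ) : (ν + mahalanobisSq S y) ^ (-s) * f y * (mvtPdfConst ν S *
      (ν + mahalanobisSq S y) ^ (-((ν + Fintype.card ι) / 2))) = mvtPdfConst ν S *
      ((ν + mahalanobisSq S y) ^ (-((ν + Fintype.card ι) / 2 + s)) * f y) := by
    rw [neg_add, Real.rpow_add (add_pos_of_pos_of_nonneg hν (mahalanobisSq_nonneg hS y))]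
    ring
  have hdeg : (ν + Fintype.card ι) / 2 + s - (k + Fintype.card ι) / 2 = (ν - k) / 2 + s := by ring
  have hmix := hf.integral_add_rpow_neg_smul (m := volume) (posHomogeneous_mahalanobisSq S)
    two_ne_zero (continuous_mahalanobisSq S).measurable (mahalanobisSq_nonneg hS)
    (by simpa only [smul_eq_mul, mul_comm] using hint) hν
    (show 0 < (ν + Fintype.card ι) / 2 + s by linarith)
    (by rw [Module.finrank_fintype_fun_eq_card]; linarith)
  simp only [Module.finrank_fintype_fun_eq_card, hdeg, smul_eq_mul] at hmix
  simp only [mvtPdf_eq_const_mul_rpow hν hS]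
  rw [integral_sub_right_eq_self (fun y => (ν + mahalanobisSq S y) ^ (-s) * f y *
    (mvtPdfConst ν S * (ν + mahalanobisSq S y) ^ (-((ν + Fintype.card ι) / 2)))) μ]
  simp only [hintegrand, integral_const_mul, hmix, mul_assoc, mul_comm (Real.exp _)]

theorem integral_add_rpow_neg_mul_outer_mul_mvtPdf (hν : 0 < ν) (hS : S.PosDef)
    (hs : 2 < ν + 2 * s) (μ : ι → ℝ) (i j : ι) :
    ∫ x, (ν + mahalanobisSq S (x - μ)) ^ (-s) * ((x i - μ i) * (x j - μ j)) * mvtPdf ν μ S x =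
      Real.Gamma (ν / 2 + s - 1) * Real.Gamma ((ν + Fintype.card ι) / 2) /
        (2 * Real.Gamma (ν / 2) * Real.Gamma ((ν + Fintype.card ι) / 2 + s)) *
        ν ^ (1 - s) * S i j := by
  have hf : PosHomogeneous 2 fun y : ι → ℝ => y i * y j := fun c _ y => by
    simp only [Pi.smul_apply, smul_eq_mul, Real.rpow_two]
    ring
  have hs0 : 0 < ν + Fintype.card ι + 2 * s := by
    have : (0 : ℝ) ≤ Fintype.card ι := Nat.cast_nonneg _
    linarith
  have hνpow : ν ^ (ν / 2) * ν ^ (-((ν - 2) / 2 + s)) = ν ^ (1 - s) := by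
    rw [← Real.rpow_add hν]
    ring_nf
  have hdet : √S.det ≠ 0 := (Real.sqrt_pos.mpr hS.det_pos).ne'
  have hpi : Real.pi ^ ((Fintype.card ι : ℝ) / 2) ≠ 0 := (Real.rpow_pos_of_pos Real.pi_pos _).ne'
  have hreduce := integral_add_rpow_neg_mul_homogeneous_mul_mvtPdf hf hν hS.posSemidef
    (integrable_mul_mul_exp_neg_mahalanobisSq hS i j) hs hs0 μ
  simp only [Pi.sub_apply, integral_mul_mul_exp_neg_mahalanobisSq hS] at hreduce
  rw [hreduce, mvtPdfConst, ← hνpow, show (ν - 2) / 2 + s = ν / 2 + s - 1 by ring]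
  field_simp

theorem expect_weighted_outer_second_general (hν : 0 < ν) (μ : ι → ℝ) (hS : S.PosDef) (i j : ι) :
    ∫ x : ι → ℝ,
        ((ν + (x - μ) ⬝ᵥ (S⁻¹ *ᵥ (x - μ))) ^ 2)⁻¹ * ((x i - μ i) * (x j - μ j)) *
          mvtPdf ν μ S x =
      S i j / ((ν + Fintype.card ι) * (ν + Fintype.card ι + 2)) := by
  have hweight (x : ι → ℝ) : ((ν + (x - μ) ⬝ᵥ (S⁻¹ *ᵥ (x - μ))) ^ 2)⁻¹ =
      (ν + mahalanobisSq S (x - μ)) ^ (-2 : ℝ) := by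
    rw [← mahalanobisSq, Real.rpow_neg
      (add_pos_of_pos_of_nonneg hν (mahalanobisSq_nonneg hS.posSemidef _)).le, Real.rpow_two]
  have ha : 0 < (ν + Fintype.card ι) / 2 := by positivity
  have hGamma := (Real.Gamma_pos_of_pos ha).ne'
  have hGammaν := (Real.Gamma_pos_of_pos (half_pos hν)).ne'
  simp only [hweight]
  rw [integral_add_rpow_neg_mul_outer_mul_mvtPdf hν hS (by linarith), gamma_add_two ha,
    show ν / 2 + 2 - 1 = ν / 2 + 1 by ring, Real.Gamma_add_one (half_pos hν).ne',
    show (1 : ℝ) - 2 = -1 by norm_num, Real.rpow_neg_one]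
  field_simp

end MultivariateT

/-- if `x ~ t_d(μ, Σ, ν)`, then `E[(ν+δ)⁻² ε ε'] = Σ/((ν+d)(ν+d+2))`
(entrywise). -/
theorem expect_weighted_outer_second {d : ℕ} (ν : ℝ) (hν : 0 < ν)
    (μ : Fin d → ℝ) (S : Matrix (Fin d) (Fin d) ℝ) (hS : S.PosDef) :
    ∀ i j : Fin d,
      (∫ x : Fin d → ℝ,
          ((ν + (x - μ) ⬝ᵥ (S⁻¹ *ᵥ (x - μ))) ^ 2)⁻¹ * ((x i - μ i) * (x j - μ j)) *
            mvtPdf ν μ S x) = S i j / ((ν + d) * (ν + d + 2)) := by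
  intro i j
  simpa only [Fintype.card_fin] using expect_weighted_outer_second_general hν μ hS i j

end
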